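/- Let G be a finite simple graph on n vertices that admits a matching of size r, and let F be a field. Then minrank_F(G) ≤ n − r. -/

import Mathlib

/-- `A` represents `G` over `F` if all diagonal entries of `A` are nonzero and `A i j = 0`
for all distinct non-adjacent vertices `i`, `j`. The minrank of `G` over `F` is the minimum
rank of a matrix representing `G` over `F`. -/
noncomputable def minrank (F : Type*) [Field F] {V : Type*} [Fintype V] [DecidableEq V]
    (G : SimpleGraph V) : ℕ :=
  sInf {r | ∃ A : Matrix V V F, (∀ i, A i i ≠ 0) ∧
    (∀ i j, i ≠ j → ¬ G.Adj i j → A i j = 0) ∧ A.rank = r}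

namespace MatchingMinrank

open SimpleGraph

variable {V : Type*} {G : SimpleGraph V}

section CliqueCover

variable {F : Type*} [Field F] [Fintype V] [DecidableEq V]

theorem minrank_le_rank {A : Matrix V V F} (hdiag : ∀ i, A i i ≠ 0)
    (hoff : ∀ i j, i ≠ j → ¬G.Adj i j → A i j = 0) : minrank F G ≤ A.rank :=
  Nat.sInf_le ⟨A, hdiag, hoff, rfl⟩

theorem minrank_le_of_colorable_compl {k : ℕ} (hG : Gᶜ.Colorable k) : minrank F G ≤ k := by
  obtain ⟨C⟩ := hG
  -- Equal-colour indicator matrix: rows of the `k × k` identity are repeated, so the rank is at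
  -- most `k`, and vertices of the same colour are adjacent in `G`.
  let A : Matrix V V F := (1 : Matrix (Fin k) (Fin k) F).submatrix C C
  have hdiag (i : V) : A i i ≠ 0 := by simp [A]
  have hoff (i j : V) (hij : i ≠ j) (hadj : ¬G.Adj i j) : A i j = 0 :=
    Matrix.one_apply_ne (C.valid ((G.compl_adj i j).2 ⟨hij, hadj⟩))
  calc
    minrank F G ≤ A.rank := minrank_le_rank hdiag hoff
    _ ≤ (1 : Matrix (Fin k) (Fin k) F).rank := Matrix.rank_submatrix_le _ _ _
    _ = k := by rw [Matrix.rank_one, Fintype.card_fin]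

end CliqueCover

section Matching

variable {M : G.Subgraph}

theorem ncard_toEdge_fiber (hM : M.IsMatching) (e : M.edgeSet) :
    (hM.toEdge ⁻¹' {e}).ncard = 2 := by
  obtain ⟨⟨u, v⟩, huv : M.Adj u v⟩ := e
  exact (congrArg Set.ncard (hM.toEdge_preimage_singleton huv)).trans
    (Set.ncard_pair (Subtype.coe_ne_coe.1 huv.ne))

theorem ncard_verts_of_isMatching (hM : M.IsMatching) :
    M.verts.ncard = M.edgeSet.ncard * 2 := by
  have fiberEquiv (e : M.edgeSet) : {v // hM.toEdge v = e} ≃ Fin 2 :=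
    have hcard : Nat.card {v // hM.toEdge v = e} = 2 := ncard_toEdge_fiber hM e
    (Nat.equivFinOfCardPos (by lia)).trans (finCongr hcard)
  have vertsEquiv : M.verts ≃ M.edgeSet × Fin 2 :=
    (Equiv.sigmaFiberEquiv hM.toEdge).symm.trans (Equiv.sigmaEquivProdOfEquiv fiberEquiv)
  simpa only [Nat.card_prod, Nat.card_fin, Nat.card_coe_set_eq] using Nat.card_congr vertsEquiv

theorem eq_or_adj_of_toEdge_eq (hM : M.IsMatching) {v w : M.verts}
    (hvw : hM.toEdge v = hM.toEdge w) : v = w ∨ M.Adj v w := by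
  obtain ⟨u, hvu, -⟩ := hM v.2
  have hw : w ∈ hM.toEdge ⁻¹' {⟨s(v.1, u), hvu⟩} := hvw.symm.trans (hM.toEdge_eq_of_adj hvu)
  rw [hM.toEdge_preimage_singleton hvu] at hw
  rcases hw with rfl | rfl
  · exact .inl rfl
  · exact .inr hvu

open Classical in
/-- The partition of the vertices into the edges of a matching and the unmatched vertices, encoded
as a colouring of the complement graph: each colour class is a clique of `G`. -/
noncomputable def matchingColoring (hM : M.IsMatching) :
    Gᶜ.Coloring (M.edgeSet ⊕ (M.vertsᶜ : Set V)) :=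
  Coloring.mk (fun v ↦ if hv : v ∈ M.verts then .inl (hM.toEdge ⟨v, hv⟩) else .inr ⟨v, hv⟩) <| by
    intro v w hvw hcolor
    obtain ⟨hne, hnadj⟩ := (G.compl_adj v w).1 hvw
    split_ifs at hcolor with hv hw
    · rcases eq_or_adj_of_toEdge_eq hM (Sum.inl_injective hcolor) with heq | hadj
      · exact hne (congrArg Subtype.val heq)
      · exact hnadj hadj.adj_sub
    · exact hne (congrArg Subtype.val (Sum.inr_injective hcolor))

theorem colorable_compl_of_isMatching [Finite V] (hM : M.IsMatching) :
    Gᶜ.Colorable (Nat.card V - M.edgeSet.ncard) := by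
  have hcard : Nat.card (M.edgeSet ⊕ (M.vertsᶜ : Set V)) = Nat.card V - M.edgeSet.ncard := by
    have hcompl := M.verts.ncard_add_ncard_compl
    rw [ncard_verts_of_isMatching hM] at hcompl
    rw [Nat.card_sum, Nat.card_coe_set_eq, Nat.card_coe_set_eq]
    lia
  rw [← hcard]
  have := Fintype.ofFinite (M.edgeSet ⊕ (M.vertsᶜ : Set V))
  rw [Nat.card_eq_fintype_card]
  exact (matchingColoring hM).colorable

end Matching

end MatchingMinrank

/-- If a graph on `n` vertices has a matching of size `r`, then its minrank over any field
is at most `n - r`. -/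
theorem minrank_le_of_matching {V : Type*} [Fintype V] [DecidableEq V] (n : ℕ)
    (hcard : Fintype.card V = n) (G : SimpleGraph V) (r : ℕ)
    (hM : ∃ M : G.Subgraph, M.IsMatching ∧ M.edgeSet.ncard = r) (F : Type*) [Field F] :
    minrank F G ≤ n - r := by
  obtain ⟨M, hM, rfl⟩ := hM
  rw [← hcard, ← Nat.card_eq_fintype_card]
  exact MatchingMinrank.minrank_le_of_colorable_compl
    (MatchingMinrank.colorable_compl_of_isMatching hM)
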